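/- (Sawtooth Lemma, Property 1.) For every t ∈ ℕ and every x ≥ 0, (1/4)·∫₀⁴ ∫₀¹ g_t(β·x + α·2^{t+1}) dα dβ = 2^{t−1}; that is, if α is uniform on [0,1] and β is uniform on [0,4], independent, then E_{α,β}[g_{t,α,β}(x)] = 2^{t−1}. -/

import Mathlib

open MeasureTheory

/-- The sawtooth function `g_t(x) = 2^t - |x - (⌊x/2^{t+1}⌋·2^{t+1} + 2^t)|`. -/
noncomputable def sawtooth (t : ℕ) (x : ℝ) : ℝ :=
  2 ^ t - |x - ((⌊x / 2 ^ (t + 1)⌋ : ℝ) * 2 ^ (t + 1) + 2 ^ t)|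

/-!
Up to scaling, `sawtooth t` is the distance `|u - round u|` to the nearest integer. The distances
of `u` and `u + 1 / 2` always add up to `1 / 2`, so the mean over a full period is `1 / 4`. For
each `β`, the variable `α` sweeps exactly one period of the sawtooth, so the inner integral alone
already has the asserted value.
-/

theorem intervalIntegral_eq_zero_of_antiperiodic {E : Type*} [NormedAddCommGroup E]
    [NormedSpace ℝ E] {f : ℝ → E} {T : ℝ} (hf : Function.Antiperiodic f T) (a : ℝ) :
    ∫ x in a..a + 2 * T, f x = 0 := by
  have : IsAddTorsionFree E := .of_isTorsionFree ℝ E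
  refine self_eq_neg.mp ?_
  calc ∫ x in a..a + 2 * T, f x
      = ∫ x in (a + T)..(a + T) + 2 * T, f x :=
        hf.periodic_two_mul.intervalIntegral_add_eq a (a + T)
    _ = ∫ x in a..a + 2 * T, f (x + T) := by
        rw [intervalIntegral.integral_comp_add_right, add_right_comm]
    _ = -∫ x in a..a + 2 * T, f x := by
        simp only [hf _, intervalIntegral.integral_neg]

section DistanceToNearestInteger

variable {K : Type*} [Field K] [LinearOrder K] [IsStrictOrderedRing K] [FloorRing K]

theorem abs_sub_round_eq_half_sub_abs (u : K) :
    |u - round u| = 1 / 2 - |Int.fract u - 1 / 2| := by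
  rw [abs_sub_round_eq_min]
  grind

theorem abs_sub_round_add_half (u : K) :
    |u + 1 / 2 - round (u + 1 / 2)| = 1 / 2 - |u - round u| := by
  have round_add_half : round (u + 1 / 2) = ⌊u⌋ + 1 := by
    rw [round_eq, add_assoc, add_halves, Int.floor_add_one]
  rw [abs_sub_round_eq_half_sub_abs u, sub_sub_cancel, round_add_half, Int.fract]
  push_cast
  ring_nf

end DistanceToNearestInteger

theorem continuous_abs_sub_round : Continuous fun u : ℝ ↦ |u - round u| := by
  simp only [← UnitAddCircle.norm_eq]
  exact continuous_norm.comp (AddCircle.continuous_mk' 1)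

theorem integral_abs_sub_round (a : ℝ) : ∫ u in a..a + 1, |u - round u| = 1 / 4 := by
  have antiperiodic : Function.Antiperiodic (fun u : ℝ ↦ |u - round u| - 1 / 4) (1 / 2) := by
    intro u
    linear_combination abs_sub_round_add_half u
  have integral_sub_mean := intervalIntegral_eq_zero_of_antiperiodic antiperiodic a
  rw [mul_one_div_cancel two_ne_zero, intervalIntegral.integral_sub
    (continuous_abs_sub_round.intervalIntegrable _ _) intervalIntegrable_const,
    intervalIntegral.integral_const, add_sub_cancel_left, one_smul] at integral_sub_mean
  exact sub_eq_zero.mp integral_sub_mean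

theorem sawtooth_mul_two_pow (t : ℕ) (u : ℝ) :
    sawtooth t (u * 2 ^ (t + 1)) = 2 ^ (t + 1) * |u - round u| := by
  have period_pos : (0 : ℝ) < 2 ^ (t + 1) := by positivity
  have offset : u * 2 ^ (t + 1) - (⌊u⌋ * 2 ^ (t + 1) + 2 ^ t) =
      2 ^ (t + 1) * (Int.fract u - 1 / 2) := by
    rw [Int.fract]
    ring
  rw [sawtooth, mul_div_cancel_right₀ _ period_pos.ne', offset, abs_mul, abs_of_pos period_pos,
    abs_sub_round_eq_half_sub_abs]
  ring

theorem sawtooth_expectation_general (t : ℕ) (c : ℝ) :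
    ∫ α in (0 : ℝ)..1, sawtooth t (c + α * 2 ^ (t + 1)) = 2 ^ t / 2 := by
  set v := c / 2 ^ (t + 1) with hv
  have rescale (α : ℝ) : c + α * 2 ^ (t + 1) = (v + α) * 2 ^ (t + 1) := by
    rw [hv]
    field_simp
  calc ∫ α in (0 : ℝ)..1, sawtooth t (c + α * 2 ^ (t + 1))
      = 2 ^ (t + 1) * ∫ α in (0 : ℝ)..1, |v + α - round (v + α)| := by
        simp only [rescale, sawtooth_mul_two_pow, intervalIntegral.integral_const_mul]
    _ = 2 ^ (t + 1) * ∫ u in v..v + 1, |u - round u| := by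
        rw [intervalIntegral.integral_comp_add_left (fun u ↦ |u - round u|), add_zero]
    _ = 2 ^ t / 2 := by
        rw [integral_abs_sub_round]
        ring

/-- Sawtooth Lemma, Property 1: with `α` uniform on `[0,1]` and `β` uniform on `[0,4]`,
independent, `E[g_t(β·x + α·2^{t+1})] = 2^{t-1}`. -/
theorem sawtooth_expectation (t : ℕ) (x : ℝ) (hx : 0 ≤ x) :
    (1 / 4) * ∫ β in (0:ℝ)..4, ∫ α in (0:ℝ)..1,
      sawtooth t (β * x + α * 2 ^ (t + 1)) = 2 ^ t / 2 := by
  simp_rw [sawtooth_expectation_general, intervalIntegral.integral_const, smul_eq_mul]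
  ring
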